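/- arXiv:2008.05558 — 3 statements merged into one kernel-verified Lean document; each statement's English description precedes it below -/
import Mathlib

section
/- Let G be a graph on n vertices with adjacency matrix A and clique number ω(G). Then the maximum value of x^T A x over the standard simplex Δ_n = {x ∈ ℝ^n : x ≥ 0, Σ_i x_i = 1} equals 1 - 1/ω(G). (Motzkin–Straus theorem.) -/
open Matrix
open scoped RealInnerProductSpace

/-- The stability (independence) number of a graph: the size of the largest set of
pairwise non-adjacent vertices. -/
noncomputable def stabilityNumber {V : Type*} (G : SimpleGraph V) : ℕ :=
  sSup {k | ∃ s : Finset V, s.card = k ∧ ∀ i ∈ s, ∀ j ∈ s, i ≠ j → ¬ G.Adj i j}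

/-- The matrix `M_{A,k} = k A + k I - J`, where `J` is the all-ones matrix. -/
noncomputable def MAk {n : ℕ} (A : Matrix (Fin n) (Fin n) ℝ) (k : ℝ) : Matrix (Fin n) (Fin n) ℝ :=
  k • A + k • (1 : Matrix (Fin n) (Fin n) ℝ) - Matrix.of (fun _ _ => (1 : ℝ))

/-- Entrywise square of a vector. -/
def vsq {n : ℕ} (x : Fin n → ℝ) : Fin n → ℝ := fun i => (x i) ^ 2

/-- A symmetric matrix `M` is copositive if `xᵀ M x ≥ 0` for all entrywise nonnegative `x`. -/
def Copositive {n : ℕ} (M : Matrix (Fin n) (Fin n) ℝ) : Prop :=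
  ∀ x : Fin n → ℝ, (∀ i, 0 ≤ x i) → 0 ≤ x ⬝ᵥ M.mulVec x

/-- The quartic form `p_M(x) = (x²)ᵀ M (x²)`. -/
noncomputable def quarticForm {n : ℕ} (M : Matrix (Fin n) (Fin n) ℝ) :
    EuclideanSpace ℝ (Fin n) → ℝ :=
  fun x => vsq x ⬝ᵥ M.mulVec (vsq x)

/-- The quadratic form `q_M(x) = xᵀ M x`. -/
noncomputable def quadForm {n : ℕ} (M : Matrix (Fin n) (Fin n) ℝ) :
    EuclideanSpace ℝ (Fin n) → ℝ :=
  fun x => x ⬝ᵥ M.mulVec x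

/-- `xm` is a local minimizer of `f` over `Ω`: `xm ∈ Ω` and there is `ε > 0` such that
`f xm ≤ f x` for all `x ∈ Ω` with `‖x - xm‖ ≤ ε` (Euclidean norm). -/
def IsLocalMinimizer {n : ℕ} (f : EuclideanSpace ℝ (Fin n) → ℝ)
    (Ω : Set (EuclideanSpace ℝ (Fin n))) (xm : EuclideanSpace ℝ (Fin n)) : Prop :=
  xm ∈ Ω ∧ ∃ ε > 0, ∀ x ∈ Ω, ‖x - xm‖ ≤ ε → f xm ≤ f x

/-- `xm` is a strict local minimizer of `f` over `Ω`: `xm ∈ Ω` and there is `ε > 0` such that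
`f xm < f x` for all `x ∈ Ω` with `x ≠ xm` and `‖x - xm‖ ≤ ε` (Euclidean norm). -/
def IsStrictLocalMinimizer {n : ℕ} (f : EuclideanSpace ℝ (Fin n) → ℝ)
    (Ω : Set (EuclideanSpace ℝ (Fin n))) (xm : EuclideanSpace ℝ (Fin n)) : Prop :=
  xm ∈ Ω ∧ ∃ ε > 0, ∀ x ∈ Ω, x ≠ xm → ‖x - xm‖ ≤ ε → f xm < f x

/-! The quadratic form `x ⬝ᵥ A *ᵥ x` has no `xᵢ²`, `xⱼ²` or `xᵢ xⱼ` term when `i` and `j` are not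
adjacent, so it is affine in the amount of weight moved from `j` to `i`. Moving all of the weight of
one of the two vertices to the other, in the better direction, does not decrease the form and
shrinks the support. After finitely many moves the support is a clique, where the form equals
`1 - ∑ i, x i ^ 2`; Cauchy–Schwarz bounds this by `1 - 1 / ω(G)`, with equality for the uniform
weight on a maximum clique. -/

section MoveWeight

variable {V R : Type*} [DecidableEq V]

/-- The weight vector obtained from `x` by moving all of the weight of the vertex `j` to the vertex
`i`, which is the exchange step of the Motzkin–Straus argument. For `i = j` it is `x` itself. -/
def moveWeight [AddCommGroup R] (x : V → R) (i j : V) : V → R :=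
  x + (Pi.single i (x j) - Pi.single j (x j))

lemma moveWeight_apply_source [AddCommGroup R] (x : V → R) {i j : V} (hij : i ≠ j) :
    moveWeight x i j j = 0 := by
  simp [moveWeight, hij.symm]

lemma moveWeight_apply_of_ne [AddCommGroup R] (x : V → R) {i j l : V} (hi : l ≠ i) (hj : l ≠ j) :
    moveWeight x i j l = x l := by
  simp [moveWeight, hi, hj]

lemma sum_moveWeight [AddCommGroup R] [Fintype V] (x : V → R) (i j : V) :
    ∑ l, moveWeight x i j l = ∑ l, x l := by
  simp [moveWeight, Finset.sum_add_distrib]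

lemma moveWeight_nonneg [AddCommGroup R] [PartialOrder R] [IsOrderedAddMonoid R] {x : V → R}
    (hx : 0 ≤ x) (i j : V) : 0 ≤ moveWeight x i j := by
  intro l
  have hi : 0 ≤ (Pi.single i (x j) : V → R) := Pi.single_nonneg.2 (hx j)
  obtain rfl | hj := eq_or_ne l j
  · simpa [moveWeight] using hi l
  · simpa [moveWeight, hj] using add_nonneg (hx l) (hi l)

lemma moveWeight_mem_stdSimplex [Fintype V] [Ring R] [PartialOrder R] [IsOrderedAddMonoid R]
    {x : V → R} (hx : x ∈ stdSimplex R V) (i j : V) : moveWeight x i j ∈ stdSimplex R V :=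
  ⟨moveWeight_nonneg hx.1 i j, (sum_moveWeight x i j).trans hx.2⟩

lemma support_moveWeight_ssubset [AddCommGroup R] {x : V → R} {i j : V} (hij : i ≠ j)
    (hi : i ∈ Function.support x) (hj : j ∈ Function.support x) :
    Function.support (moveWeight x i j) ⊂ Function.support x := by
  refine (Set.ssubset_iff_of_subset fun l hl ↦ ?_).2 ⟨j, hj, ?_⟩
  · by_cases hli : l = i
    · rwa [hli]
    by_cases hlj : l = j
    · rwa [hlj]
    rwa [Function.mem_support, moveWeight_apply_of_ne x hli hlj] at hl
  · simp [moveWeight_apply_source x hij]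

end MoveWeight

lemma dotProduct_mulVec_add_self_of_isSymm {V R : Type*} [Fintype V] [CommSemiring R]
    {A : Matrix V V R} (hA : A.IsSymm) (x v : V → R) :
    (x + v) ⬝ᵥ A *ᵥ (x + v) = x ⬝ᵥ A *ᵥ x + 2 * (v ⬝ᵥ A *ᵥ x) + v ⬝ᵥ A *ᵥ v := by
  have hcomm : x ⬝ᵥ A *ᵥ v = v ⬝ᵥ A *ᵥ x := by
    simpa only [hA.eq] using dotProduct_transpose_mulVec A x v
  rw [mulVec_add, add_dotProduct, dotProduct_add, dotProduct_add, hcomm]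
  ring

section CliqueSupport

variable {V R : Type*} [Fintype V] (G : SimpleGraph V) [DecidableRel G.Adj]

lemma dotProduct_adjMatrix_mulVec_moveWeight [DecidableEq V] [CommRing R] (x : V → R) {i j : V}
    (hij : ¬ G.Adj i j) :
    moveWeight x i j ⬝ᵥ G.adjMatrix R *ᵥ moveWeight x i j =
      x ⬝ᵥ G.adjMatrix R *ᵥ x + 2 * (x j * ((G.adjMatrix R *ᵥ x) i - (G.adjMatrix R *ᵥ x) j)) := by
  have hji : ¬ G.Adj j i := fun h ↦ hij h.symm
  set d : V → R := Pi.single i (x j) - Pi.single j (x j) with hd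
  have quadratic_term : d ⬝ᵥ G.adjMatrix R *ᵥ d = 0 := by
    simp [hd, mulVec_sub, sub_dotProduct, hij, hji]
  have linear_term :
      d ⬝ᵥ G.adjMatrix R *ᵥ x = x j * ((G.adjMatrix R *ᵥ x) i - (G.adjMatrix R *ᵥ x) j) := by
    simp only [hd, sub_dotProduct, single_dotProduct, mul_sub]
  rw [moveWeight, dotProduct_mulVec_add_self_of_isSymm G.isSymm_adjMatrix, linear_term,
    quadratic_term, add_zero]

lemma dotProduct_adjMatrix_mulVec_le_moveWeight [DecidableEq V] [CommRing R] [PartialOrder R]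
    [IsOrderedRing R] {x : V → R} {i j : V} (hij : ¬ G.Adj i j) (hj : 0 ≤ x j)
    (hle : (G.adjMatrix R *ᵥ x) j ≤ (G.adjMatrix R *ᵥ x) i) :
    x ⬝ᵥ G.adjMatrix R *ᵥ x ≤ moveWeight x i j ⬝ᵥ G.adjMatrix R *ᵥ moveWeight x i j := by
  rw [dotProduct_adjMatrix_mulVec_moveWeight G x hij]
  exact le_add_of_nonneg_right (mul_nonneg zero_le_two (mul_nonneg hj (sub_nonneg.2 hle)))

lemma exists_support_ssubset_of_not_isClique_support [CommRing R] [LinearOrder R]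
    [IsOrderedRing R] {x : V → R} (hx : x ∈ stdSimplex R V)
    (hclique : ¬ G.IsClique (Function.support x)) :
    ∃ y ∈ stdSimplex R V, Function.support y ⊂ Function.support x ∧
      x ⬝ᵥ G.adjMatrix R *ᵥ x ≤ y ⬝ᵥ G.adjMatrix R *ᵥ y := by
  classical
  obtain ⟨i, hi, j, hj, hij, hadj⟩ :
      ∃ i ∈ Function.support x, ∃ j ∈ Function.support x, i ≠ j ∧ ¬ G.Adj i j := by
    simpa [SimpleGraph.IsClique, Set.Pairwise] using hclique
  wlog hle : (G.adjMatrix R *ᵥ x) j ≤ (G.adjMatrix R *ᵥ x) i generalizing i j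
  · exact this j hj i hi hij.symm (fun h ↦ hadj h.symm) (le_of_not_ge hle)
  exact ⟨moveWeight x i j, moveWeight_mem_stdSimplex hx i j, support_moveWeight_ssubset hij hi hj,
    dotProduct_adjMatrix_mulVec_le_moveWeight G hadj (hx.1 j) hle⟩

lemma exists_isClique_support_dotProduct_adjMatrix_mulVec_le [CommRing R] [LinearOrder R]
    [IsOrderedRing R] {x : V → R} (hx : x ∈ stdSimplex R V) :
    ∃ y ∈ stdSimplex R V, G.IsClique (Function.support y) ∧
      x ⬝ᵥ G.adjMatrix R *ᵥ x ≤ y ⬝ᵥ G.adjMatrix R *ᵥ y := by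
  induction hS : Function.support x using WellFoundedLT.induction generalizing x with
  | _ S ih =>
    subst hS
    by_cases hclique : G.IsClique (Function.support x)
    · exact ⟨x, hx, hclique, le_rfl⟩
    · obtain ⟨y, hy, hyx, hxy⟩ := exists_support_ssubset_of_not_isClique_support G hx hclique
      obtain ⟨z, hz, hzclique, hyz⟩ := ih _ hyx hy rfl
      exact ⟨z, hz, hzclique, hxy.trans hyz⟩

variable {G}

lemma dotProduct_adjMatrix_mulVec_of_isClique_support [Ring R] {x : V → R}
    (hx : G.IsClique (Function.support x)) :
    x ⬝ᵥ G.adjMatrix R *ᵥ x = (∑ i, x i) ^ 2 - ∑ i, x i ^ 2 := by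
  classical
  have entry (i j : V) :
      (if G.Adj i j then x i * x j else 0) = x i * x j - if i = j then x i * x j else 0 := by
    obtain rfl | hij := eq_or_ne i j
    · simp
    by_cases hi : x i = 0
    · simp [hi]
    by_cases hj : x j = 0
    · simp [hj]
    simp [hij, hx hi hj hij]
  simp only [G.dotProduct_mulVec_adjMatrix, entry, Finset.sum_sub_distrib, Finset.sum_ite_eq,
    Finset.mem_univ, if_true, sq, Finset.sum_mul_sum]

end CliqueSupport

lemma sq_sum_le_cliqueNum_mul_sum_sq {V R : Type*} [Fintype V] {G : SimpleGraph V} [Semiring R]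
    [LinearOrder R] [IsStrictOrderedRing R] [ExistsAddOfLE R] {x : V → R}
    (hx : G.IsClique (Function.support x)) :
    (∑ i, x i) ^ 2 ≤ G.cliqueNum * ∑ i, x i ^ 2 := by
  classical
  set s : Finset V := {i | x i ≠ 0} with hs
  have hcard : s.card ≤ G.cliqueNum :=
    SimpleGraph.IsClique.card_le_cliqueNum (tc := by simpa [hs, Function.support] using hx)
  calc (∑ i, x i) ^ 2 = (∑ i ∈ s, x i) ^ 2 := by rw [hs, Finset.sum_filter_ne_zero]
    _ ≤ s.card * ∑ i ∈ s, x i ^ 2 := sq_sum_le_card_mul_sum_sq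
    _ ≤ G.cliqueNum * ∑ i, x i ^ 2 := by
      gcongr
      · exact Finset.sum_nonneg fun i _ ↦ sq_nonneg (x i)
      · exact fun i _ _ ↦ sq_nonneg (x i)
      · exact s.subset_univ

lemma cliqueNum_pos {V : Type*} [Finite V] [Nonempty V] (G : SimpleGraph V) :
    0 < G.cliqueNum := by
  obtain ⟨v⟩ := ‹Nonempty V›
  have hv : G.IsClique (({v} : Finset V) : Set V) := by simp
  exact (Finset.card_pos.2 (Finset.singleton_nonempty v)).trans_le
    (SimpleGraph.IsClique.card_le_cliqueNum (tc := hv))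

section UniformWeight

variable {V 𝕜 : Type*} [Fintype V]

lemma centroidWeightsIndicator_mem_stdSimplex [DivisionRing 𝕜] [LinearOrder 𝕜]
    [IsStrictOrderedRing 𝕜] {s : Finset V} (hs : s.Nonempty) :
    s.centroidWeightsIndicator 𝕜 ∈ stdSimplex 𝕜 V := by
  refine ⟨fun i ↦ ?_, s.sum_centroidWeightsIndicator_eq_one_of_nonempty 𝕜 hs⟩
  rw [Finset.centroidWeightsIndicator_def]
  exact Set.indicator_nonneg (fun _ _ ↦ by simp) i

lemma sum_centroidWeightsIndicator_sq [DivisionRing 𝕜] [CharZero 𝕜] (s : Finset V) :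
    ∑ i, s.centroidWeightsIndicator 𝕜 i ^ 2 = 1 / (s.card : 𝕜) := by
  classical
  obtain rfl | hs := s.eq_empty_or_nonempty
  · simp [Finset.centroidWeightsIndicator_def]
  have hcard : (s.card : 𝕜) ≠ 0 := by exact_mod_cast hs.card_ne_zero
  simp [Finset.centroidWeightsIndicator_def, Set.indicator_apply, ite_pow, sq, hcard]

lemma dotProduct_adjMatrix_mulVec_centroidWeightsIndicator [DivisionRing 𝕜] [CharZero 𝕜]
    {G : SimpleGraph V} [DecidableRel G.Adj] {s : Finset V} (hs : s.Nonempty)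
    (hclique : G.IsClique (s : Set V)) :
    s.centroidWeightsIndicator 𝕜 ⬝ᵥ G.adjMatrix 𝕜 *ᵥ s.centroidWeightsIndicator 𝕜 =
      1 - 1 / (s.card : 𝕜) := by
  have hsupport : Function.support (s.centroidWeightsIndicator 𝕜) ⊆ s := by
    rw [Finset.centroidWeightsIndicator_def]
    exact Set.support_indicator_subset
  rw [dotProduct_adjMatrix_mulVec_of_isClique_support (hclique.subset hsupport),
    s.sum_centroidWeightsIndicator_eq_one_of_nonempty 𝕜 hs, sum_centroidWeightsIndicator_sq,
    one_pow]

end UniformWeight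

lemma dotProduct_adjMatrix_mulVec_le_one_sub_one_div_cliqueNum {V 𝕜 : Type*} [Fintype V] [Field 𝕜]
    [LinearOrder 𝕜] [IsStrictOrderedRing 𝕜] {G : SimpleGraph V} [DecidableRel G.Adj] {x : V → 𝕜}
    (hx : x ∈ stdSimplex 𝕜 V) :
    x ⬝ᵥ G.adjMatrix 𝕜 *ᵥ x ≤ 1 - 1 / (G.cliqueNum : 𝕜) := by
  obtain ⟨y, hy, hclique, hxy⟩ := exists_isClique_support_dotProduct_adjMatrix_mulVec_le G hx
  have hω : 1 / (G.cliqueNum : 𝕜) ≤ ∑ i, y i ^ 2 := by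
    have hcauchy := sq_sum_le_cliqueNum_mul_sum_sq hclique
    rw [hy.2, one_pow] at hcauchy
    exact div_le_of_le_mul₀ (Nat.cast_nonneg _) (by positivity) (by rwa [mul_comm])
  calc x ⬝ᵥ G.adjMatrix 𝕜 *ᵥ x ≤ y ⬝ᵥ G.adjMatrix 𝕜 *ᵥ y := hxy
    _ = 1 - ∑ i, y i ^ 2 := by
      rw [dotProduct_adjMatrix_mulVec_of_isClique_support hclique, hy.2, one_pow]
    _ ≤ 1 - 1 / (G.cliqueNum : 𝕜) := sub_le_sub_left hω 1

theorem motzkin_straus_general {V 𝕜 : Type*} [Fintype V] [Nonempty V] [Field 𝕜] [LinearOrder 𝕜]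
    [IsStrictOrderedRing 𝕜] (G : SimpleGraph V) [DecidableRel G.Adj] :
    IsGreatest ((fun x : V → 𝕜 ↦ x ⬝ᵥ G.adjMatrix 𝕜 *ᵥ x) '' stdSimplex 𝕜 V)
      (1 - 1 / (G.cliqueNum : 𝕜)) := by
  constructor
  · obtain ⟨s, hs⟩ := G.exists_isNClique_cliqueNum
    have hne : s.Nonempty := Finset.card_pos.1 (hs.card_eq ▸ cliqueNum_pos G)
    refine ⟨s.centroidWeightsIndicator 𝕜, centroidWeightsIndicator_mem_stdSimplex hne, ?_⟩
    simpa only [hs.card_eq] using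
      dotProduct_adjMatrix_mulVec_centroidWeightsIndicator hne hs.isClique
  · rintro _ ⟨x, hx, rfl⟩
    exact dotProduct_adjMatrix_mulVec_le_one_sub_one_div_cliqueNum hx

/-- **Motzkin–Straus.** For a graph `G` on `n ≥ 1` vertices with adjacency matrix `A` and
clique number `ω(G)`, the maximum of `xᵀ A x` over the standard simplex is `1 - 1/ω(G)`. -/
theorem motzkin_straus {n : ℕ} (hn : 0 < n) (G : SimpleGraph (Fin n)) [DecidableRel G.Adj] :
    IsGreatest ((fun x : Fin n → ℝ => x ⬝ᵥ (G.adjMatrix ℝ).mulVec x) '' stdSimplex ℝ (Fin n))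
      (1 - 1 / (G.cliqueNum : ℝ)) := by
  have : NeZero n := .of_pos hn
  exact motzkin_straus_general G
end

section
/- Let G be a graph on n vertices with adjacency matrix A and stability number α(G), and let k > 0 be a real scalar. The matrix M_{A,k} := kA + kI - J is copositive if and only if α(G) ≤ k. -/
/-!
Since `xᵀ M_{A,k} x = k xᵀ(A + I)x - (∑ i, x i)²`, copositivity says that
`(∑ i, x i)² ≤ k xᵀ(A + I)x` for all `x ≥ 0`. On a vector whose support is stable, `xᵀ(A + I)x` is
`∑ i, (x i)²`: the indicator of a maximum stable set then forces `α(G) ≤ k`, and Cauchy–Schwarz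
gives the inequality with `k = α(G)`. An arbitrary `x ≥ 0` is reduced to this case as in
Motzkin–Straus: if `i` and `j` are adjacent, then `xᵀ(A + I)x` is affine along `e_i - e_j`, so all
the weight of one of the two vertices can be moved onto the other without increasing the form.
-/

open Matrix
open scoped RealInnerProductSpace

section Transfer

variable {V R : Type*} [DecidableEq V] [Ring R]

/-- The vector obtained from `x`, seen as a weighting of the vertices, by moving all the weight of
`j` onto `i`. It is written as a displacement along `e_i - e_j`, the direction in which the
quadratic form of `A + I` is affine. -/
def transfer (x : V → R) (i j : V) : V → R :=
  x + x j • (Pi.single i 1 - Pi.single j 1)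

lemma transfer_apply_right (x : V → R) {i j : V} (hij : i ≠ j) : transfer x i j j = 0 := by
  simp [transfer, hij.symm]

lemma transfer_apply_of_ne (x : V → R) {i j l : V} (hi : l ≠ i) (hj : l ≠ j) :
    transfer x i j l = x l := by
  simp [transfer, hi, hj]

lemma transfer_nonneg [PartialOrder R] [IsOrderedAddMonoid R] {x : V → R}
    (hx : ∀ l, 0 ≤ x l) (i j l : V) : 0 ≤ transfer x i j l := by
  have hxl := hx l
  have hadd := add_nonneg hxl (hx j)
  by_cases hi : l = i <;> by_cases hj : l = j <;> simp_all [transfer]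

lemma sum_transfer [Fintype V] (x : V → R) (i j : V) : ∑ l, transfer x i j l = ∑ l, x l := by
  simp [transfer, Finset.sum_add_distrib, ← Finset.mul_sum]

lemma support_transfer_ssubset {x : V → R} {i j : V} (hij : i ≠ j) (hi : x i ≠ 0) (hj : x j ≠ 0) :
    Function.support (transfer x i j) ⊂ Function.support x := by
  refine (Set.ssubset_iff_of_subset fun l hl ↦ ?_).2
    ⟨j, hj, Function.notMem_support.2 (transfer_apply_right x hij)⟩
  by_cases hli : l = i
  · exact hli ▸ hi
  by_cases hlj : l = j
  · exact hlj ▸ hj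
  rwa [Function.mem_support, transfer_apply_of_ne x hli hlj] at hl

end Transfer

section QuadraticForm

variable {V R : Type*} [Fintype V]

lemma dotProduct_mulVec_ones [CommSemiring R] (x : V → R) :
    x ⬝ᵥ (of fun _ _ ↦ 1 : Matrix V V R) *ᵥ x = (∑ i, x i) ^ 2 := by
  simp [dotProduct, mulVec, ← Finset.sum_mul, sq]

lemma dotProduct_mulVec_add_self [CommSemiring R] {M : Matrix V V R} (hM : M.IsSymm)
    (x v : V → R) :
    (x + v) ⬝ᵥ M *ᵥ (x + v) = x ⬝ᵥ M *ᵥ x + 2 * (v ⬝ᵥ M *ᵥ x) + v ⬝ᵥ M *ᵥ v := by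
  have hcomm : x ⬝ᵥ M *ᵥ v = v ⬝ᵥ M *ᵥ x := by
    simpa only [hM.eq] using dotProduct_transpose_mulVec M x v
  rw [mulVec_add, add_dotProduct, dotProduct_add, dotProduct_add, hcomm]
  ring

variable [DecidableEq V] [CommRing R]

lemma dotProduct_smul_add_smul_one_sub_ones_mulVec (A : Matrix V V R) (k : R) (x : V → R) :
    x ⬝ᵥ (k • A + k • 1 - of fun _ _ ↦ 1) *ᵥ x =
      k * (x ⬝ᵥ (A + 1) *ᵥ x) - (∑ i, x i) ^ 2 := by
  rw [← smul_add, sub_mulVec, dotProduct_sub, dotProduct_mulVec_ones, smul_mulVec,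
    dotProduct_smul, smul_eq_mul]

lemma dotProduct_mulVec_transfer {M : Matrix V V R} (hM : M.IsSymm) {i j : V}
    (hij : M i i + M j j = 2 * M i j) (x : V → R) :
    transfer x i j ⬝ᵥ M *ᵥ transfer x i j =
      x ⬝ᵥ M *ᵥ x + 2 * x j * ((M *ᵥ x) i - (M *ᵥ x) j) := by
  let d : V → R := Pi.single i 1 - Pi.single j 1
  have linear : d ⬝ᵥ M *ᵥ x = (M *ᵥ x) i - (M *ᵥ x) j := by
    simp only [d, sub_dotProduct, single_one_dotProduct]
  have quadratic : d ⬝ᵥ M *ᵥ d = 0 := by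
    simp only [d, sub_dotProduct, mulVec_sub, single_one_dotProduct, Pi.sub_apply,
      mulVec_single_one, col_apply, hM.apply i j]
    linear_combination hij
  rw [transfer, dotProduct_mulVec_add_self hM, mulVec_smul, smul_dotProduct, smul_dotProduct,
    dotProduct_smul, linear, quadratic]
  simp only [smul_eq_mul]
  ring

end QuadraticForm

section StableSets

lemma sq_sum_le_indepNum_mul_sum_sq {V R : Type*} [Fintype V] [Ring R] [LinearOrder R]
    [IsStrictOrderedRing R] {G : SimpleGraph V} {x : V → R}
    (hx : G.IsIndepSet (Function.support x)) :
    (∑ i, x i) ^ 2 ≤ G.indepNum * ∑ i, x i ^ 2 := by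
  let s : Finset V := {i | x i ≠ 0}
  have hs : G.IsIndepSet (s : Set V) := by simpa [s, Function.support] using hx
  calc (∑ i, x i) ^ 2 = (∑ i ∈ s, x i) ^ 2 := by rw [Finset.sum_filter_ne_zero]
    _ ≤ s.card * ∑ i ∈ s, x i ^ 2 := sq_sum_le_card_mul_sum_sq
    _ ≤ G.indepNum * ∑ i, x i ^ 2 := by
      gcongr
      · exact hs.card_le_indepNum
      · exact s.subset_univ

variable {V R : Type*} [Fintype V] [DecidableEq V] (G : SimpleGraph V) [DecidableRel G.Adj]

lemma dotProduct_adjMatrix_add_one_mulVec [Semiring R] (x : V → R) :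
    x ⬝ᵥ (G.adjMatrix R + 1) *ᵥ x =
      ∑ i, ∑ j, (if G.Adj i j then x i * x j else 0) + ∑ i, x i ^ 2 := by
  rw [add_mulVec, one_mulVec, dotProduct_add, G.dotProduct_mulVec_adjMatrix]
  simp only [dotProduct, sq]

variable {G}

lemma dotProduct_adjMatrix_add_one_mulVec_of_isIndepSet [Semiring R] {x : V → R}
    (hx : G.IsIndepSet (Function.support x)) :
    x ⬝ᵥ (G.adjMatrix R + 1) *ᵥ x = ∑ i, x i ^ 2 := by
  have no_edge (i j : V) : (if G.Adj i j then x i * x j else 0) = 0 := by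
    split_ifs with hij
    · by_contra hne
      exact hx (left_ne_zero_of_mul hne) (right_ne_zero_of_mul hne) hij.ne hij
    · rfl
  simp only [dotProduct_adjMatrix_add_one_mulVec, no_edge, Finset.sum_const_zero, zero_add]

variable [CommRing R] [LinearOrder R] [IsStrictOrderedRing R] {x : V → R}

lemma dotProduct_adjMatrix_add_one_mulVec_nonneg (hx : ∀ i, 0 ≤ x i) :
    0 ≤ x ⬝ᵥ (G.adjMatrix R + 1) *ᵥ x := by
  rw [dotProduct_adjMatrix_add_one_mulVec]
  refine add_nonneg (Finset.sum_nonneg fun i _ ↦ Finset.sum_nonneg fun j _ ↦ ?_)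
    (Finset.sum_nonneg fun i _ ↦ sq_nonneg (x i))
  split_ifs
  exacts [mul_nonneg (hx i) (hx j), le_rfl]

lemma dotProduct_mulVec_transfer_le (hx : ∀ l, 0 ≤ x l) {i j : V} (hij : G.Adj i j)
    (hle : ((G.adjMatrix R + 1) *ᵥ x) i ≤ ((G.adjMatrix R + 1) *ᵥ x) j) :
    transfer x i j ⬝ᵥ (G.adjMatrix R + 1) *ᵥ transfer x i j ≤
      x ⬝ᵥ (G.adjMatrix R + 1) *ᵥ x := by
  have hsymm : (G.adjMatrix R + 1).IsSymm := G.isSymm_adjMatrix.add isSymm_one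
  rw [dotProduct_mulVec_transfer hsymm (by simp [hij, hij.ne, one_add_one_eq_two])]
  exact add_le_of_nonpos_right <|
    mul_nonpos_of_nonneg_of_nonpos (mul_nonneg zero_le_two (hx j)) (sub_nonpos.2 hle)

variable (G) in
lemma exists_isIndepSet_support_dotProduct_mulVec_le (hx : ∀ i, 0 ≤ x i) :
    ∃ y : V → R, G.IsIndepSet (Function.support y) ∧ ∑ i, y i = ∑ i, x i ∧
      y ⬝ᵥ (G.adjMatrix R + 1) *ᵥ y ≤ x ⬝ᵥ (G.adjMatrix R + 1) *ᵥ x := by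
  induction hS : Function.support x using WellFoundedLT.induction generalizing x with
  | ind S ih =>
  subst hS
  by_cases hindep : G.IsIndepSet (Function.support x)
  · exact ⟨x, hindep, rfl, le_rfl⟩
  obtain ⟨i, j, hi, hj, hij, hle⟩ : ∃ i j, x i ≠ 0 ∧ x j ≠ 0 ∧ G.Adj i j ∧
      ((G.adjMatrix R + 1) *ᵥ x) i ≤ ((G.adjMatrix R + 1) *ᵥ x) j := by
    simp only [SimpleGraph.isIndepSet_iff, Set.Pairwise, not_forall, not_not] at hindep
    obtain ⟨i, hi, j, hj, -, hij⟩ := hindep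
    rcases le_total (((G.adjMatrix R + 1) *ᵥ x) i) (((G.adjMatrix R + 1) *ᵥ x) j) with hle | hle
    · exact ⟨i, j, hi, hj, hij, hle⟩
    · exact ⟨j, i, hj, hi, hij.symm, hle⟩
  obtain ⟨y, hy, hsum, hform⟩ :=
    ih _ (support_transfer_ssubset hij.ne hi hj) (transfer_nonneg hx i j) rfl
  exact ⟨y, hy, hsum.trans (sum_transfer x i j),
    hform.trans (dotProduct_mulVec_transfer_le hx hij hle)⟩

variable (G) in
theorem sq_sum_le_indepNum_mul_dotProduct_mulVec (hx : ∀ i, 0 ≤ x i) :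
    (∑ i, x i) ^ 2 ≤ G.indepNum * (x ⬝ᵥ (G.adjMatrix R + 1) *ᵥ x) := by
  obtain ⟨y, hy, hsum, hform⟩ := exists_isIndepSet_support_dotProduct_mulVec_le G hx
  calc (∑ i, x i) ^ 2 = (∑ i, y i) ^ 2 := by rw [hsum]
    _ ≤ G.indepNum * ∑ i, y i ^ 2 := sq_sum_le_indepNum_mul_sum_sq hy
    _ = G.indepNum * (y ⬝ᵥ (G.adjMatrix R + 1) *ᵥ y) := by
      rw [dotProduct_adjMatrix_add_one_mulVec_of_isIndepSet hy]
    _ ≤ G.indepNum * (x ⬝ᵥ (G.adjMatrix R + 1) *ᵥ x) := by gcongr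

lemma card_le_of_forall_sq_sum_le {k : R} (hk : 0 ≤ k)
    (h : ∀ x : V → R, (∀ i, 0 ≤ x i) → (∑ i, x i) ^ 2 ≤ k * (x ⬝ᵥ (G.adjMatrix R + 1) *ᵥ x))
    {s : Finset V} (hs : G.IsIndepSet (s : Set V)) : (s.card : R) ≤ k := by
  let e : V → R := fun i ↦ if i ∈ s then 1 else 0
  have hsupp : Function.support e = s := by ext i; simp [e]
  have hform : e ⬝ᵥ (G.adjMatrix R + 1) *ᵥ e = s.card := by
    rw [dotProduct_adjMatrix_add_one_mulVec_of_isIndepSet (hsupp ▸ hs)]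
    simp [e]
  have hsq : (s.card : R) * s.card ≤ k * s.card := by
    simpa [hform, e, sq] using h e fun i ↦ by positivity
  rcases (Nat.cast_nonneg (α := R) s.card).eq_or_lt with hzero | hpos
  · exact hzero ▸ hk
  · exact le_of_mul_le_mul_right hsq hpos

variable (G) in
theorem MAk_copositive_iff_general {k : R} (hk : 0 ≤ k) :
    (∀ x : V → R, (∀ i, 0 ≤ x i) →
      0 ≤ x ⬝ᵥ (k • G.adjMatrix R + k • 1 - of fun _ _ ↦ 1) *ᵥ x) ↔ (G.indepNum : R) ≤ k := by
  simp only [dotProduct_smul_add_smul_one_sub_ones_mulVec, sub_nonneg]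
  constructor
  · intro h
    obtain ⟨s, hs⟩ := G.exists_isNIndepSet_indepNum
    exact hs.card_eq ▸ card_le_of_forall_sq_sum_le hk h hs.isIndepSet
  · intro h x hx
    exact (sq_sum_le_indepNum_mul_dotProduct_mulVec G hx).trans
      (mul_le_mul_of_nonneg_right h (dotProduct_adjMatrix_add_one_mulVec_nonneg hx))

end StableSets

lemma stabilityNumber_eq_indepNum {V : Type*} (G : SimpleGraph V) :
    stabilityNumber G = G.indepNum := by
  simp only [stabilityNumber, SimpleGraph.indepNum, SimpleGraph.isNIndepSet_iff,
    SimpleGraph.isIndepSet_iff, Set.Pairwise, Finset.mem_coe, and_comm]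

/-- For `k > 0`, the matrix `M_{A,k} = kA + kI - J` is copositive iff `α(G) ≤ k`. -/
theorem MAk_copositive_iff {n : ℕ} (G : SimpleGraph (Fin n)) [DecidableRel G.Adj]
    (k : ℝ) (hk : 0 < k) :
    Copositive (MAk (G.adjMatrix ℝ) k) ↔ (stabilityNumber G : ℝ) ≤ k := by
  rw [stabilityNumber_eq_indepNum]
  exact MAk_copositive_iff_general G hk.le
end

section
/- Let G be a graph on n vertices with adjacency matrix A, and let k > 0 be a noninteger real scalar. Then the quartic form p_{A,k}(x) := (x²)^T (kA + kI - J) (x²) has no nonzero second-order point; i.e., there is no x̄ ∈ ℝ^n with x̄ ≠ 0, ∇p_{A,k}(x̄) = 0, and ∇²p_{A,k}(x̄) positive semidefinite. -/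
open Matrix
open scoped RealInnerProductSpace

/-!
At a second-order point `x` of `(x²)ᵀ M (x²)` the gradient `4 x ∘ M x²` vanishes, so `M x²` is zero
on the support `S` of `x`, and there the Hessian reduces to `8 diag(x) M diag(x)`. Hence the
principal submatrix `M_S` is positive semidefinite and annihilates the positive vector `x²`.

For `M = k A + k I - J`, the submatrix `M_S` is the matrix of the same form of the subgraph induced
on `S`. An induced path `i - j - l` in it would give `e_i - 2 e_j + e_l` the negative value `-2 k`,
so the components of this subgraph are cliques. Each row of `M_S x² = 0` now says that `k` times the
`x²`-weight of a component is the total weight; summing over the components, `k` is their number.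
-/

section SecondOrderPoint

variable {E : Type*} [NormedAddCommGroup E] [InnerProductSpace ℝ E] [CompleteSpace E]

/-- A second-order point of `f`: the gradient vanishes and the Hessian, taken as the derivative of
the gradient, is positive semidefinite. -/
def IsSecondOrderPoint (f : E → ℝ) (x : E) : Prop :=
  gradient f x = 0 ∧ ∀ v, 0 ≤ ⟪fderiv ℝ (gradient f) x v, v⟫

end SecondOrderPoint

section QuarticForm

variable {ι : Type*}

theorem nonempty_setOf_ne_zero {x : EuclideanSpace ℝ ι} (hx : x ≠ 0) : Nonempty {i | x i ≠ 0} :=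
  (Function.support_nonempty_iff.2 (mt (WithLp.ofLp_eq_zero 2).1 hx)).to_subtype

variable [Fintype ι]

/-- The quartic form `(x²)ᵀ M (x²)` of `quarticForm`, for coordinates indexed by any finite type. -/
def quarticFormOn (M : Matrix ι ι ℝ) (x : EuclideanSpace ℝ ι) : ℝ :=
  x.ofLp ^ 2 ⬝ᵥ M *ᵥ x.ofLp ^ 2

/-- The gradient `4 x ∘ M x²` of `quarticFormOn M` at `x`, for symmetric `M`. -/
def quarticGradient (M : Matrix ι ι ℝ) (x : EuclideanSpace ℝ ι) : EuclideanSpace ℝ ι :=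
  WithLp.toLp 2 ((4 : ℝ) • (x.ofLp * M *ᵥ x.ofLp ^ 2))

/-- The Hessian matrix `4 diag(M x²) + 8 diag(x) M diag(x)` of `quarticFormOn M` at `x`, for
symmetric `M`. -/
def quarticHessian [DecidableEq ι] (M : Matrix ι ι ℝ) (x : EuclideanSpace ℝ ι) : Matrix ι ι ℝ :=
  (4 : ℝ) • diagonal (M *ᵥ x.ofLp ^ 2) + (8 : ℝ) • (diagonal x.ofLp * M * diagonal x.ofLp)

theorem hasFDerivAt_dotProduct_sq (c : ι → ℝ) (x : EuclideanSpace ℝ ι) :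
    HasFDerivAt (fun y : EuclideanSpace ℝ ι => c ⬝ᵥ y.ofLp ^ 2)
      (∑ j, (c j * (2 * x j)) • (EuclideanSpace.proj j : StrongDual ℝ (EuclideanSpace ℝ ι))) x := by
  simp only [dotProduct, Pi.pow_apply]
  refine HasFDerivAt.fun_sum fun j _ => ?_
  simpa [smul_smul] using ((HasFDerivAt.pow (PiLp.hasFDerivAt_apply 2 x j) 2).const_mul (c j))

theorem hasGradientAt_quarticFormOn {M : Matrix ι ι ℝ} (hM : M.IsSymm) (x : EuclideanSpace ℝ ι) :
    HasGradientAt (quarticFormOn M) (quarticGradient M x) x := by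
  have hform : quarticFormOn M = fun y => ∑ i, y i ^ 2 * (M i ⬝ᵥ y.ofLp ^ 2) := rfl
  rw [hasGradientAt_iff_hasFDerivAt, hform]
  refine (HasFDerivAt.fun_sum fun i _ => (HasFDerivAt.pow (PiLp.hasFDerivAt_apply 2 x i) 2).fun_mul
    (hasFDerivAt_dotProduct_sq (M i) x)).congr_fderiv ?_
  ext v
  have hsymm : ∑ i, x i ^ 2 * ∑ j, M i j * (2 * x j) * v j =
      ∑ i, M i ⬝ᵥ x.ofLp ^ 2 * (2 * x i * v i) := by
    simp only [Finset.mul_sum, dotProduct, Finset.sum_mul]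
    rw [Finset.sum_comm]
    refine Finset.sum_congr rfl fun i _ => Finset.sum_congr rfl fun j _ => ?_
    rw [hM.apply i j, Pi.pow_apply]
    ring
  suffices ∑ i, M i ⬝ᵥ x.ofLp ^ 2 * (2 * x i * v i) + ∑ i, M i ⬝ᵥ x.ofLp ^ 2 * (2 * x i * v i) =
      4 * ∑ i, v i * (x i * M i ⬝ᵥ x.ofLp ^ 2) by
    simpa [Finset.sum_add_distrib, quarticGradient, hsymm, PiLp.inner_apply, mulVec]
  rw [← Finset.sum_add_distrib, Finset.mul_sum]
  exact Finset.sum_congr rfl fun i _ => by ring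

theorem hasFDerivAt_quarticGradient [DecidableEq ι] (M : Matrix ι ι ℝ) (x : EuclideanSpace ℝ ι) :
    HasFDerivAt (quarticGradient M) (toEuclideanCLM (𝕜 := ℝ) (quarticHessian M x)) x := by
  rw [← hasFDerivWithinAt_univ, hasFDerivWithinAt_euclidean]
  intro i
  have hcoord : (fun y => quarticGradient M y i) = fun y => 4 * (y i * (M i ⬝ᵥ y.ofLp ^ 2)) := rfl
  rw [hcoord, hasFDerivWithinAt_univ]
  refine ((HasFDerivAt.fun_mul (PiLp.hasFDerivAt_apply 2 x i)
    (hasFDerivAt_dotProduct_sq (M i) x)).const_mul 4).congr_fderiv ?_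
  ext v
  have hhess : (quarticHessian M x *ᵥ v.ofLp) i =
      4 * ((M i ⬝ᵥ x.ofLp ^ 2) * v i) + 8 * ∑ j, x i * M i j * x j * v j := by
    simp only [quarticHessian, add_mulVec, smul_mulVec, Pi.add_apply, Pi.smul_apply,
      mulVec_diagonal, smul_eq_mul]
    simp only [mulVec, dotProduct, mul_diagonal, diagonal_mul]
  have hcross : x i * ∑ j, M i j * (2 * x j) * v j = 2 * ∑ j, x i * M i j * x j * v j := by
    rw [Finset.mul_sum, Finset.mul_sum]
    exact Finset.sum_congr rfl fun j _ => by ring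
  simp only [_root_.smul_apply, _root_.add_apply, _root_.sum_apply, ContinuousLinearMap.comp_apply,
    PiLp.proj_apply, smul_eq_mul, ofLp_toEuclideanCLM, hhess, hcross]
  ring

theorem isSymm_quarticHessian [DecidableEq ι] {M : Matrix ι ι ℝ} (hM : M.IsSymm)
    (x : EuclideanSpace ℝ ι) : (quarticHessian M x).IsSymm := by
  refine ((isSymm_diagonal _).smul _).add (.smul ?_ _)
  rw [IsSymm, transpose_mul, transpose_mul, diagonal_transpose, hM.eq, Matrix.mul_assoc]

theorem IsSecondOrderPoint.posSemidef_quarticHessian [DecidableEq ι] {M : Matrix ι ι ℝ}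
    (hM : M.IsSymm) {x : EuclideanSpace ℝ ι} (hx : IsSecondOrderPoint (quarticFormOn M) x) :
    (quarticHessian M x).PosSemidef := by
  have hgrad : gradient (quarticFormOn M) = quarticGradient M :=
    funext fun y => (hasGradientAt_quarticFormOn hM y).gradient
  refine .of_dotProduct_mulVec_nonneg (isSymm_quarticHessian hM x) fun v => ?_
  simpa [hgrad, (hasFDerivAt_quarticGradient M x).fderiv, EuclideanSpace.inner_eq_star_dotProduct]
    using hx.2 (WithLp.toLp 2 v)

theorem IsSecondOrderPoint.mulVec_sq_eq_zero {M : Matrix ι ι ℝ} (hM : M.IsSymm)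
    {x : EuclideanSpace ℝ ι} (hx : IsSecondOrderPoint (quarticFormOn M) x) {i : ι} (hi : x i ≠ 0) :
    (M *ᵥ x.ofLp ^ 2) i = 0 := by
  have hgrad : quarticGradient M x = 0 := (hasGradientAt_quarticFormOn hM x).gradient ▸ hx.1
  simpa [quarticGradient, hi] using congrArg (· i) hgrad

theorem IsSecondOrderPoint.submatrix_mulVec_sq_eq_zero {M : Matrix ι ι ℝ} (hM : M.IsSymm)
    {x : EuclideanSpace ℝ ι} (hx : IsSecondOrderPoint (quarticFormOn M) x) :
    (M.submatrix (↑) (↑) : Matrix {i | x i ≠ 0} {i | x i ≠ 0} ℝ) *ᵥ (fun i => x i ^ 2) = 0 := by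
  ext i
  rw [Pi.zero_apply, ← hx.mulVec_sq_eq_zero hM i.2]
  refine Fintype.sum_of_injective _ Subtype.val_injective _ _ (fun j hj => ?_) fun _ => rfl
  have hj : x j = 0 := by simpa using hj
  simp [hj]

theorem IsSecondOrderPoint.posSemidef_submatrix {M : Matrix ι ι ℝ} (hM : M.IsSymm)
    {x : EuclideanSpace ℝ ι} (hx : IsSecondOrderPoint (quarticFormOn M) x) :
    (M.submatrix (↑) (↑) : Matrix {i | x i ≠ 0} {i | x i ≠ 0} ℝ).PosSemidef := by
  classical
  let D : Matrix {i | x i ≠ 0} {i | x i ≠ 0} ℝ := diagonal fun i => (x i)⁻¹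
  let H : Matrix {i | x i ≠ 0} {i | x i ≠ 0} ℝ := (quarticHessian M x).submatrix (↑) (↑)
  have hH : H.PosSemidef := (hx.posSemidef_quarticHessian hM).submatrix _
  have hscale : (M.submatrix (↑) (↑) : Matrix {i | x i ≠ 0} {i | x i ≠ 0} ℝ) =
      (8⁻¹ : ℝ) • (Dᴴ * H * D) := by
    ext ⟨i, hi⟩ ⟨j, hj⟩
    have hi : x i ≠ 0 := hi
    have hj : x j ≠ 0 := hj
    have hdiag : diagonal (M *ᵥ x.ofLp ^ 2) i j = 0 := by
      rw [diagonal_apply, hx.mulVec_sq_eq_zero hM hi, ite_self]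
    simp only [D, H, quarticHessian, conjTranspose_eq_transpose_of_trivial, diagonal_transpose,
      submatrix_apply, Matrix.smul_apply, Matrix.add_apply, mul_diagonal, diagonal_mul, hdiag,
      smul_eq_mul, mul_zero, zero_add]
    field_simp
  rw [hscale]
  exact (hH.conjTranspose_mul_mul_same D).smul (by norm_num)

end QuarticForm

section Graph

variable {V : Type*} {G : SimpleGraph V}

theorem reachable_iff_eq_or_adj (h : ∀ ⦃i j l⦄, G.Adj i j → G.Adj j l → i ≠ l → G.Adj i l)
    {i j : V} : G.Reachable i j ↔ i = j ∨ G.Adj i j := by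
  refine ⟨fun hij => ?_, ?_⟩
  · rw [G.reachable_iff_reflTransGen] at hij
    induction hij with
    | refl => exact .inl rfl
    | @tail j l _ hjl ih =>
      rcases ih with rfl | hij
      · exact .inr hjl
      · exact or_iff_not_imp_left.2 (h hij hjl)
  · rintro (rfl | hij)
    · exact .rfl
    · exact hij.reachable

variable [DecidableEq V] [DecidableRel G.Adj] {k : ℝ}

variable (G k) in
/-- The matrix `k A + k I - J` of `MAk` for a graph on any vertex type, so that it also applies to
induced subgraphs. -/
def shiftedAdjMatrix : Matrix V V ℝ :=
  k • G.adjMatrix ℝ + k • 1 - of fun _ _ => 1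

variable (G k) in
theorem isSymm_shiftedAdjMatrix : (shiftedAdjMatrix G k).IsSymm :=
  ((G.isSymm_adjMatrix.smul k).add (isSymm_one.smul k)).sub rfl

theorem shiftedAdjMatrix_apply (i j : V) :
    shiftedAdjMatrix G k i j = (if i = j ∨ G.Adj i j then k else 0) - 1 := by
  by_cases hij : i = j
  · simp [shiftedAdjMatrix, hij]
  · simp [shiftedAdjMatrix, SimpleGraph.adjMatrix_apply, hij]

theorem submatrix_shiftedAdjMatrix {W : Type*} [DecidableEq W] {H : SimpleGraph W}
    [DecidableRel H.Adj] (f : H ↪g G) :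
    (shiftedAdjMatrix G k).submatrix f f = shiftedAdjMatrix H k := by
  ext i j
  simp [shiftedAdjMatrix, one_apply, f.injective.eq_iff]

theorem adj_of_adj_of_posSemidef_shiftedAdjMatrix (hk : 0 < k)
    (hM : (shiftedAdjMatrix G k).PosSemidef) {i j l : V} (hij : G.Adj i j) (hjl : G.Adj j l)
    (hil : i ≠ l) : G.Adj i l := by
  by_contra hnil
  have hminor : (shiftedAdjMatrix G k).submatrix ![i, j, l] ![i, j, l] =
      !![k - 1, k - 1, -1; k - 1, k - 1, k - 1; -1, k - 1, k - 1] := by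
    ext a b
    fin_cases a <;> fin_cases b <;>
      simp [shiftedAdjMatrix_apply, hij, hjl, hij.symm, hjl.symm, hil, hil.symm, hnil,
        G.adj_comm l i]
  have hform : 0 ≤ ![1, -2, 1] ⬝ᵥ (shiftedAdjMatrix G k).submatrix ![i, j, l] ![i, j, l] *ᵥ
      ![1, -2, 1] := (hM.submatrix ![i, j, l]).dotProduct_mulVec_nonneg ![1, -2, 1]
  simp only [hminor, cons_mulVec, empty_mulVec, cons_dotProduct, dotProduct_of_isEmpty,
    vecHead, vecTail, Function.comp_apply, cons_val_zero, cons_val_succ] at hform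
  linarith

variable [Fintype V]

theorem shiftedAdjMatrix_mulVec_apply (y : V → ℝ) (i : V) :
    (shiftedAdjMatrix G k *ᵥ y) i = k * ∑ j with i = j ∨ G.Adj i j, y j - ∑ j, y j := by
  simp only [mulVec, dotProduct, shiftedAdjMatrix_apply, Finset.mul_sum, Finset.sum_filter,
    ← Finset.sum_sub_distrib, sub_mul, one_mul, ite_mul, zero_mul, mul_ite, mul_zero]

theorem pos_of_shiftedAdjMatrix_mulVec_eq_zero [Nonempty V] {y : V → ℝ} (hy : ∀ i, 0 < y i)
    (hMy : shiftedAdjMatrix G k *ᵥ y = 0) : 0 < k := by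
  obtain ⟨i⟩ := ‹Nonempty V›
  have hrow := (shiftedAdjMatrix_mulVec_apply y i).symm.trans (congrFun hMy i)
  have htotal : 0 < ∑ j, y j := Finset.sum_pos (fun j _ => hy j) ⟨i, Finset.mem_univ i⟩
  have hmul : 0 < k * ∑ j with i = j ∨ G.Adj i j, y j := htotal.trans_eq (sub_eq_zero.1 hrow).symm
  exact pos_of_mul_pos_left hmul (Finset.sum_nonneg fun j _ => (hy j).le)

theorem eq_card_connectedComponent_of_posSemidef_shiftedAdjMatrix [Nonempty V] {y : V → ℝ}
    (hy : ∀ i, 0 < y i) (hMy : shiftedAdjMatrix G k *ᵥ y = 0)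
    (hM : (shiftedAdjMatrix G k).PosSemidef) : k = Nat.card G.ConnectedComponent := by
  have := Fintype.ofFinite G.ConnectedComponent
  let : DecidableEq G.ConnectedComponent := Classical.decEq _
  have hk := pos_of_shiftedAdjMatrix_mulVec_eq_zero hy hMy
  have htotal : 0 < ∑ j, y j := Finset.sum_pos (fun j _ => hy j) Finset.univ_nonempty
  have hweight (C : G.ConnectedComponent) :
      k * ∑ j with G.connectedComponentMk j = C, y j = ∑ j, y j := by
    induction C using SimpleGraph.ConnectedComponent.ind with | _ i
    have hrow := (shiftedAdjMatrix_mulVec_apply y i).symm.trans (congrFun hMy i)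
    have hclosed (j : V) : G.connectedComponentMk j = G.connectedComponentMk i ↔
        i = j ∨ G.Adj i j := by
      rw [eq_comm, SimpleGraph.ConnectedComponent.eq, reachable_iff_eq_or_adj fun _ _ _ =>
        adj_of_adj_of_posSemidef_shiftedAdjMatrix hk hM]
    simp only [hclosed]
    exact sub_eq_zero.1 hrow
  refine mul_right_cancel₀ htotal.ne' ?_
  calc k * ∑ j, y j
      = ∑ C, k * ∑ j with G.connectedComponentMk j = C, y j := by
        rw [← Finset.mul_sum, Finset.sum_fiberwise]
    _ = Nat.card G.ConnectedComponent * ∑ j, y j := by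
        simp only [hweight, Finset.sum_const, Finset.card_univ, nsmul_eq_mul,
          Nat.card_eq_fintype_card]

theorem IsSecondOrderPoint.eq_card_connectedComponent {x : EuclideanSpace ℝ V} (hx₀ : x ≠ 0)
    (hx : IsSecondOrderPoint (quarticFormOn (shiftedAdjMatrix G k)) x) :
    k = Nat.card (G.induce {i | x i ≠ 0}).ConnectedComponent := by
  have := nonempty_setOf_ne_zero hx₀
  have hsymm := isSymm_shiftedAdjMatrix G k
  have hsub := submatrix_shiftedAdjMatrix (k := k)
    (SimpleGraph.Embedding.induce (G := G) {i | x i ≠ 0})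
  refine eq_card_connectedComponent_of_posSemidef_shiftedAdjMatrix
    (fun i => sq_pos_of_ne_zero i.2) ?_ ?_
  · exact hsub ▸ hx.submatrix_mulVec_sq_eq_zero hsymm
  · exact hsub ▸ hx.posSemidef_submatrix hsymm

theorem pAk_no_nonzero_second_order_point_general (G : SimpleGraph V) [DecidableRel G.Adj] (k : ℝ)
    (hk : ∀ m : ℕ, 0 < m → (m : ℝ) ≠ k) :
    ¬ ∃ x : EuclideanSpace ℝ V, x ≠ 0 ∧
      IsSecondOrderPoint (quarticFormOn (shiftedAdjMatrix G k)) x := by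
  rintro ⟨x, hx₀, hx⟩
  have := nonempty_setOf_ne_zero hx₀
  exact hk _ Nat.card_pos (hx.eq_card_connectedComponent hx₀).symm

end Graph

/-- For `k > 0` noninteger, the quartic form `p_{A,k}` has no nonzero second-order point:
no nonzero point with vanishing gradient and positive semidefinite Hessian. -/
theorem pAk_no_nonzero_second_order_point {n : ℕ} (G : SimpleGraph (Fin n))
    [DecidableRel G.Adj] (k : ℝ) (hk : 0 < k) (hk' : ∀ m : ℤ, (m : ℝ) ≠ k) :
    ¬ ∃ xm : EuclideanSpace ℝ (Fin n), xm ≠ 0 ∧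
        gradient (quarticForm (MAk (G.adjMatrix ℝ) k)) xm = 0 ∧
        ∀ v : EuclideanSpace ℝ (Fin n),
          0 ≤ ⟪fderiv ℝ (gradient (quarticForm (MAk (G.adjMatrix ℝ) k))) xm v, v⟫ :=
  pAk_no_nonzero_second_order_point_general G k fun m _ => mod_cast hk' m
end
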